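/- A connected signed graph Σ is balanced if and only if det L^min(Σ) = 0, where L^min(Σ) = Tr(G) − D^min(Σ) is the min-signed distance Laplacian matrix. -/

import Mathlib

/-!
The Laplacian acts by `(L x) u = ∑ v, d(u,v) (x u - s(u,v) x v)` with `s = σ_min`, and, as `d` is
symmetric and `s² = 1`, its quadratic form is
`2 xᵀ L x = ∑ u v, d(u,v) (x u - s(u,v) x v)²`.

If `det L = 0`, a nonzero kernel vector `x` makes every square vanish, so `x u = s(u,v) x v` for
all `u ≠ v`. The only shortest path between adjacent vertices is their edge, hence
`x u = σ(uv) x v` along edges and `x u = σ(P) x v` along every walk `P` from `u` to `v`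
(`apply_eq_walkSign_mul`). Connectedness makes `x` nowhere zero, and going around a cycle `C` gives
`σ(C) = 1`.

If the graph is balanced, erasing loops from a walk does not change its sign
(`walkSign_bypass`), so every closed walk is positive. The signs `x v` of chosen walks from a root
to `v` then satisfy `σ(P) = x u * x v` for every walk `P` from `u` to `v`; in particular
`s(u,v) = x u * x v`, and `x` lies in the kernel of `L`.
-/

open Classical

noncomputable section

/-- `σ_max(u,v)`: the maximum of `σ(P)` over all shortest `uv`-paths `P`; it is `-1`
exactly when all shortest `uv`-paths are negative. -/
def sigmaMax {V : Type*} (G : SimpleGraph V) (σ : Sym2 V → ℝ) (u v : V) : ℝ :=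
  if ∃ p : G.Walk u v, p.IsPath ∧ p.length = G.dist u v ∧ (p.edges.map σ).prod = 1
  then 1 else -1

/-- `σ_min(u,v)`: the minimum of `σ(P)` over all shortest `uv`-paths `P`; it is `+1`
exactly when all shortest `uv`-paths are positive. -/
def sigmaMin {V : Type*} (G : SimpleGraph V) (σ : Sym2 V → ℝ) (u v : V) : ℝ :=
  if ∃ p : G.Walk u v, p.IsPath ∧ p.length = G.dist u v ∧ (p.edges.map σ).prod = -1
  then -1 else 1

/-- The max-signed distance matrix `D^max(Σ) = (σ_max(u,v) d(u,v))`. -/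
def distMax {V : Type*} [Fintype V] (G : SimpleGraph V) (σ : Sym2 V → ℝ) :
    Matrix V V ℝ :=
  Matrix.of fun u v => sigmaMax G σ u v * (G.dist u v : ℝ)

/-- The min-signed distance matrix `D^min(Σ) = (σ_min(u,v) d(u,v))`. -/
def distMin {V : Type*} [Fintype V] (G : SimpleGraph V) (σ : Sym2 V → ℝ) :
    Matrix V V ℝ :=
  Matrix.of fun u v => sigmaMin G σ u v * (G.dist u v : ℝ)

/-- The diagonal matrix `Tr(G)` of transmissions `Tr(v) = ∑_u d(v,u)`. -/
def transMat {V : Type*} [Fintype V] [DecidableEq V] (G : SimpleGraph V) :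
    Matrix V V ℝ :=
  Matrix.diagonal fun v => ((∑ u, G.dist v u : ℕ) : ℝ)

/-- The max-signed distance Laplacian `L^max(Σ) = Tr(G) - D^max(Σ)`. -/
def lapMax {V : Type*} [Fintype V] [DecidableEq V] (G : SimpleGraph V)
    (σ : Sym2 V → ℝ) : Matrix V V ℝ :=
  transMat G - distMax G σ

/-- The min-signed distance Laplacian `L^min(Σ) = Tr(G) - D^min(Σ)`. -/
def lapMin {V : Type*} [Fintype V] [DecidableEq V] (G : SimpleGraph V)
    (σ : Sym2 V → ℝ) : Matrix V V ℝ :=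
  transMat G - distMin G σ

/-- The sign of a walk: the product of the signs of its edges, with multiplicity. -/
def walkSign {V : Type*} {G : SimpleGraph V} (σ : Sym2 V → ℝ) {u v : V} (p : G.Walk u v) : ℝ :=
  (p.edges.map σ).prod

section WalkSign

variable {V : Type*} {G : SimpleGraph V} {σ : Sym2 V → ℝ} {u v w : V}

lemma walkSign_cons (h : G.Adj u v) (p : G.Walk v w) :
    walkSign σ (SimpleGraph.Walk.cons h p) = σ s(u, v) * walkSign σ p := by
  simp [walkSign]

lemma walkSign_append (p : G.Walk u v) (q : G.Walk v w) :
    walkSign σ (p.append q) = walkSign σ p * walkSign σ q := by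
  simp [walkSign]

lemma walkSign_reverse (p : G.Walk u v) : walkSign σ p.reverse = walkSign σ p := by
  simp [walkSign]

lemma walkSign_eq_one_or (hσ : ∀ e ∈ G.edgeSet, σ e = 1 ∨ σ e = -1) (p : G.Walk u v) :
    walkSign σ p = 1 ∨ walkSign σ p = -1 := by
  induction p with
  | nil => simp [walkSign]
  | cons h p ih =>
    rw [walkSign_cons]
    rcases hσ _ ((SimpleGraph.mem_edgeSet G).2 h) with h1 | h1 <;>
      rcases ih with h2 | h2 <;> simp [h1, h2]

lemma walkSign_mul_self (hσ : ∀ e ∈ G.edgeSet, σ e = 1 ∨ σ e = -1) (p : G.Walk u v) :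
    walkSign σ p * walkSign σ p = 1 := by
  rcases walkSign_eq_one_or hσ p with h | h <;> simp [h]

/-- A path closed up by an edge `uv` is a cycle, unless the path is that edge itself; in both cases
the resulting closed walk is positive. -/
lemma sign_mul_walkSign_of_isPath (hσ : ∀ e ∈ G.edgeSet, σ e = 1 ∨ σ e = -1)
    (hbal : ∀ (u : V) (c : G.Walk u u), c.IsCycle → walkSign σ c = 1)
    (h : G.Adj u v) (p : G.Walk v u) (hp : p.IsPath) :
    σ s(u, v) * walkSign σ p = 1 := by
  by_cases he : s(u, v) ∈ p.edges
  · cases p with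
    | nil => exact absurd h (G.loopless.irrefl _)
    | @cons _ w _ h' q =>
      rw [SimpleGraph.Walk.cons_isPath_iff] at hp
      rw [SimpleGraph.Walk.edges_cons, List.mem_cons] at he
      -- `v` does not occur in `q`, so the edge `uv` can only be the first edge of the path.
      have hwu : w = u := by
        rcases he with he | he
        · rw [Sym2.eq_iff] at he
          rcases he with ⟨h1, -⟩ | ⟨h1, -⟩
          · exact absurd h1 h.ne
          · exact h1.symm
        · exact absurd (q.snd_mem_support_of_mem_edges he) hp.2
      subst hwu
      have hq : q = SimpleGraph.Walk.nil := (SimpleGraph.Walk.isPath_iff_nil.1 hp.1).eq_nil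
      subst hq
      rw [walkSign_cons, Sym2.eq_swap (a := v)]
      rcases hσ _ ((SimpleGraph.mem_edgeSet G).2 h) with h1 | h1 <;> simp [h1, walkSign]
  · rw [← walkSign_cons h p]
    exact hbal u _ ((SimpleGraph.Walk.cons_isCycle_iff p h).2 ⟨hp, he⟩)

/-- In a balanced signed graph, erasing the loops of a walk preserves its sign. -/
lemma walkSign_bypass (hσ : ∀ e ∈ G.edgeSet, σ e = 1 ∨ σ e = -1)
    (hbal : ∀ (u : V) (c : G.Walk u u), c.IsCycle → walkSign σ c = 1)
    (p : G.Walk u v) : walkSign σ p.bypass = walkSign σ p := by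
  induction p with
  | nil => rfl
  | @cons u v w h p ih =>
    rw [walkSign_cons, ← ih, SimpleGraph.Walk.bypass]
    split_ifs with hs
    · have hspec := congrArg (walkSign σ) (p.bypass.take_spec hs)
      rw [walkSign_append] at hspec
      have hloop := sign_mul_walkSign_of_isPath hσ hbal h (p.bypass.takeUntil u hs)
        (p.bypass_isPath.takeUntil hs)
      rw [← hspec, ← mul_assoc, hloop, one_mul]
    · rw [walkSign_cons]

lemma walkSign_closed (hσ : ∀ e ∈ G.edgeSet, σ e = 1 ∨ σ e = -1)
    (hbal : ∀ (u : V) (c : G.Walk u u), c.IsCycle → walkSign σ c = 1)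
    (p : G.Walk u u) : walkSign σ p = 1 := by
  rw [← walkSign_bypass hσ hbal p, (SimpleGraph.Walk.isPath_iff_nil.1 p.bypass_isPath).eq_nil]
  simp [walkSign]

/-- A function compatible with the signs of the edges is compatible with the signs of walks. -/
lemma apply_eq_walkSign_mul {x : V → ℝ} (hx : ∀ u v, G.Adj u v → x u = σ s(u, v) * x v)
    (p : G.Walk u v) : x u = walkSign σ p * x v := by
  induction p with
  | nil => simp [walkSign]
  | cons h p ih => rw [walkSign_cons, mul_assoc, ← ih, hx _ _ h]

/-- The edge is the only shortest path between adjacent vertices. -/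
lemma sigmaMin_of_adj (hσ : ∀ e ∈ G.edgeSet, σ e = 1 ∨ σ e = -1) (h : G.Adj u v) :
    sigmaMin G σ u v = σ s(u, v) := by
  have key : (∃ p : G.Walk u v, p.IsPath ∧ p.length = G.dist u v ∧ (p.edges.map σ).prod = -1) ↔
      σ s(u, v) = -1 := by
    rw [SimpleGraph.dist_eq_one_iff_adj.2 h]
    constructor
    · rintro ⟨p, -, hl, hs⟩
      cases p with
      | nil => simp at hl
      | cons h' q =>
        cases q with
        | nil => simpa using hs
        | cons h'' q => simp at hl
    · intro hs
      exact ⟨h.toWalk, by simp [h.ne], by simp, by simpa using hs⟩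
  unfold sigmaMin
  rcases hσ _ ((SimpleGraph.mem_edgeSet G).2 h) with h1 | h1
  · rw [if_neg (fun hc => by have := key.1 hc; linarith), h1]
  · rw [if_pos (key.2 h1), h1]

lemma sigmaMin_mul_self : sigmaMin G σ u v * sigmaMin G σ u v = 1 := by
  unfold sigmaMin
  split_ifs <;> norm_num

end WalkSign

section Laplacian

variable {V : Type*} [Fintype V] [DecidableEq V] {G : SimpleGraph V} {σ : Sym2 V → ℝ}

lemma lapMin_mulVec (x : V → ℝ) (u : V) :
    (lapMin G σ).mulVec x u = ∑ v, (G.dist u v : ℝ) * (x u - sigmaMin G σ u v * x v) := by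
  rw [lapMin, Matrix.sub_mulVec, Pi.sub_apply, transMat, Matrix.mulVec_diagonal]
  simp only [distMin, Matrix.mulVec, dotProduct, Matrix.of_apply]
  push_cast
  rw [Finset.sum_mul, ← Finset.sum_sub_distrib]
  exact Finset.sum_congr rfl fun v _ => by ring

/-- The quadratic form of the Laplacian as a weighted sum of squares. -/
lemma two_mul_quadForm (x : V → ℝ) :
    ∑ u, ∑ v, (G.dist u v : ℝ) * (x u - sigmaMin G σ u v * x v) ^ 2 =
      2 * ∑ u, x u * (lapMin G σ).mulVec x u := by
  have hsymm : ∑ u, ∑ v, (G.dist u v : ℝ) * x v ^ 2 = ∑ u, ∑ v, (G.dist u v : ℝ) * x u ^ 2 := by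
    rw [Finset.sum_comm]
    simp only [SimpleGraph.dist_comm]
  have hexp : ∀ u v, (G.dist u v : ℝ) * (x u - sigmaMin G σ u v * x v) ^ 2 =
      2 * (x u * ((G.dist u v : ℝ) * (x u - sigmaMin G σ u v * x v))) +
        ((G.dist u v : ℝ) * x v ^ 2 - (G.dist u v : ℝ) * x u ^ 2) := fun u v => by
    linear_combination (G.dist u v : ℝ) * x v ^ 2 *
      sigmaMin_mul_self (G := G) (σ := σ) (u := u) (v := v)
  simp only [hexp, Finset.sum_add_distrib, Finset.sum_sub_distrib, hsymm, lapMin_mulVec,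
    Finset.mul_sum, sub_self, add_zero]

lemma apply_eq_of_mulVec_eq_zero (hσ : ∀ e ∈ G.edgeSet, σ e = 1 ∨ σ e = -1) {x : V → ℝ}
    (hx : (lapMin G σ).mulVec x = 0) (u v : V) (h : G.Adj u v) : x u = σ s(u, v) * x v := by
  have hzero := two_mul_quadForm (G := G) (σ := σ) x
  simp only [hx, Pi.zero_apply, mul_zero, Finset.sum_const_zero] at hzero
  have hnn : ∀ u v, 0 ≤ (G.dist u v : ℝ) * (x u - sigmaMin G σ u v * x v) ^ 2 :=
    fun u v => by positivity
  rw [Finset.sum_eq_zero_iff_of_nonneg fun u _ => Finset.sum_nonneg fun v _ => hnn u v] at hzero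
  have hu := hzero u (Finset.mem_univ u)
  rw [Finset.sum_eq_zero_iff_of_nonneg fun v _ => hnn u v] at hu
  have huv := hu v (Finset.mem_univ v)
  rw [SimpleGraph.dist_eq_one_iff_adj.2 h, sigmaMin_of_adj hσ h, Nat.cast_one, one_mul,
    sq_eq_zero_iff] at huv
  linarith

/-- If all walks from `u` to `v` have sign `x u * x v`, then `x` is in the kernel of the
Laplacian. -/
lemma mulVec_eq_zero_of_walkSign (hconn : G.Connected) {x : V → ℝ} (hx1 : ∀ v, x v * x v = 1)
    (hx : ∀ (u v : V) (p : G.Walk u v), walkSign σ p = x u * x v) :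
    (lapMin G σ).mulVec x = 0 := by
  funext u
  rw [lapMin_mulVec, Pi.zero_apply]
  refine Finset.sum_eq_zero fun v _ => ?_
  have hs : sigmaMin G σ u v = x u * x v := by
    obtain ⟨p, hp, hl⟩ := (hconn u v).exists_path_of_dist
    unfold sigmaMin
    split_ifs with hc
    · obtain ⟨q, -, -, hq⟩ := hc
      rw [← hx u v q]
      exact hq.symm
    · have hne : x u * x v ≠ -1 := fun h => hc ⟨p, hp, hl, (hx u v p).trans h⟩
      have hsq : (x u * x v) * (x u * x v) = 1 := by
        linear_combination (x v * x v) * hx1 u + hx1 v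
      rcases mul_self_eq_one_iff.1 hsq with h | h
      · exact h.symm
      · exact absurd h hne
  rw [hs, mul_assoc, hx1 v, mul_one, sub_self, mul_zero]

end Laplacian

/-- A connected signed graph `Σ` is balanced (every cycle has positive
sign) if and only if `det L^min(Σ) = 0`. -/
theorem balanced_iff_det_lapMin_eq_zero
    {V : Type*} [Fintype V] [DecidableEq V] (G : SimpleGraph V)
    (σ : Sym2 V → ℝ)
    (hσ : ∀ e ∈ G.edgeSet, σ e = 1 ∨ σ e = -1)
    (hconn : G.Connected) :
    (∀ (u : V) (c : G.Walk u u), c.IsCycle → (c.edges.map σ).prod = 1) ↔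
      (lapMin G σ).det = 0 := by
  rw [← Matrix.exists_mulVec_eq_zero_iff]
  constructor
  · intro hbal
    obtain ⟨r⟩ := hconn.nonempty
    have P : ∀ v, G.Walk r v := fun v => (hconn r v).some
    have hP : ∀ v, walkSign σ (P v) * walkSign σ (P v) = 1 := fun v => walkSign_mul_self hσ (P v)
    refine ⟨fun v => walkSign σ (P v), fun h0 => ?_, mulVec_eq_zero_of_walkSign hconn hP ?_⟩
    · have hr : walkSign σ (P r) = 0 := congrFun h0 r
      simpa [hr] using hP r
    · intro u v p
      have hc := walkSign_closed hσ hbal (((P u).append p).append (P v).reverse)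
      rw [walkSign_append, walkSign_append, walkSign_reverse] at hc
      -- This closed walk has sign `σ(P u) σ(p) σ(P v)`, where `σ(P u)` and `σ(P v)` square to `1`.
      linear_combination (walkSign σ (P u) * walkSign σ (P v)) * hc -
        (walkSign σ p * (walkSign σ (P v) * walkSign σ (P v))) * hP u - walkSign σ p * hP v
  · rintro ⟨x, hx0, hx⟩ u c -
    have hwalk := fun {u v : V} (p : G.Walk u v) =>
      apply_eq_walkSign_mul (apply_eq_of_mulVec_eq_zero hσ hx) p
    -- By connectedness, a zero of `x` would propagate to all vertices.
    have hu : x u ≠ 0 := fun hu => hx0 <| funext fun v => by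
      rw [hwalk (hconn v u).some, hu, mul_zero, Pi.zero_apply]
    have hc := hwalk c
    exact mul_right_cancel₀ hu (by rw [one_mul]; exact hc.symm)
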